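/- Let R and S be difunctional relations on a type α (difunctional subsets of α × α), and let ∼ be the relation of the previous statement: R ∼ S iff there is a difunctional T ⊆ α × α with R⁻¹ ∘ R = T ∘ T⁻¹ and T⁻¹ ∘ T = S ∘ S⁻¹. Then R ∼ R⁻¹, R ∼ Left(R) = R ∘ R⁻¹ and R ∼ Right(R) = R⁻¹ ∘ R; and if the composition R ∘ S is defined (R⁻¹ ∘ R = S ∘ S⁻¹) then R ∼ S, R ∼ R ∘ S and S ∼ R ∘ S. (Paper's Lemma (∼.B), in the base case of point types.) -/

import Mathlib

/-- The converse of a relation `R ⊆ α × β`. -/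
def rconv {α β : Type*} (R : Set (α × β)) : Set (β × α) := {p | (p.2, p.1) ∈ R}

/-- Composition of relations `R ⊆ α × β` and `S ⊆ β × γ`. -/
def rcomp {α β γ : Type*} (R : Set (α × β)) (S : Set (β × γ)) : Set (α × γ) :=
  {p | ∃ j, (p.1, j) ∈ R ∧ (j, p.2) ∈ S}

/-- A relation is difunctional when `R ∘ R⁻¹ ∘ R ⊆ R`, i.e.
`(i,j) ∈ R`, `(k,j) ∈ R`, `(k,l) ∈ R` imply `(i,l) ∈ R`. -/
def Difunctional {α β : Type*} (R : Set (α × β)) : Prop :=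
  ∀ ⦃i j k l⦄, (i, j) ∈ R → (k, j) ∈ R → (k, l) ∈ R → (i, l) ∈ R

/-- The paper's relation `R ∼ S`: there is a difunctional `T` with
`Right(R) = Left(T)` and `Right(T) = Left(S)`, i.e. `R ∘ T ∘ S` is defined. -/
def simRel {α : Type*} (R S : Set (α × α)) : Prop :=
  ∃ T : Set (α × α), Difunctional T ∧
    rcomp (rconv R) R = rcomp T (rconv T) ∧ rcomp (rconv T) T = rcomp S (rconv S)

theorem rconv_rconv' {α β : Type*} (R : Set (α × β)) : rconv (rconv R) = R := rfl

theorem rcomp_assoc' {α β γ δ : Type*} (R : Set (α × β)) (S : Set (β × γ)) (T : Set (γ × δ)) :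
    rcomp (rcomp R S) T = rcomp R (rcomp S T) := by
  ext ⟨a, d⟩
  constructor
  · rintro ⟨c, ⟨b, h1, h2⟩, h3⟩
    exact ⟨b, h1, c, h2, h3⟩
  · rintro ⟨b, h1, c, h2, h3⟩
    exact ⟨c, ⟨b, h1, h2⟩, h3⟩

theorem rconv_rcomp' {α β γ : Type*} (R : Set (α × β)) (S : Set (β × γ)) :
    rconv (rcomp R S) = rcomp (rconv S) (rconv R) := by
  ext ⟨a, d⟩
  constructor
  · rintro ⟨c, h1, h2⟩
    exact ⟨c, h2, h1⟩
  · rintro ⟨c, h1, h2⟩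
    exact ⟨c, h2, h1⟩

theorem dif_iff {α β : Type*} (R : Set (α × β)) :
    Difunctional R ↔ rcomp R (rcomp (rconv R) R) = R := by
  constructor
  · intro h
    ext ⟨a, b⟩
    constructor
    · rintro ⟨c, h1, d, h2, h3⟩
      exact h h1 h2 h3
    · intro h1
      exact ⟨b, h1, a, h1, h1⟩
  · intro h i j k l h1 h2 h3
    rw [← h]
    exact ⟨j, h1, k, h2, h3⟩

theorem dif_conv {α β : Type*} {R : Set (α × β)} (h : Difunctional R) :
    Difunctional (rconv R) := fun _ _ _ _ h1 h2 h3 => h h3 h2 h1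

theorem left_idem {α β : Type*} {R : Set (α × β)} (h : Difunctional R) :
    rcomp (rcomp R (rconv R)) (rcomp R (rconv R)) = rcomp R (rconv R) := by
  have h1 := (dif_iff R).1 h
  rw [← rcomp_assoc', rcomp_assoc' R, h1]

theorem left_conv {α β : Type*} (R : Set (α × β)) :
    rconv (rcomp R (rconv R)) = rcomp R (rconv R) := by
  rw [rconv_rcomp', rconv_rconv']

theorem left_dif {α β : Type*} {R : Set (α × β)} (h : Difunctional R) :
    Difunctional (rcomp R (rconv R)) := by
  rw [dif_iff, left_conv, left_idem h, left_idem h]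

theorem left_comp {α β γ : Type*} {R : Set (α × β)} {S : Set (β × γ)} (hR : Difunctional R)
    (h : rcomp (rconv R) R = rcomp S (rconv S)) :
    rcomp (rcomp R S) (rconv (rcomp R S)) = rcomp R (rconv R) := by
  rw [rconv_rcomp', rcomp_assoc', ← rcomp_assoc' S, ← h, ← rcomp_assoc', (dif_iff R).1 hR]

theorem comp_dif {α β γ : Type*} {R : Set (α × β)} {S : Set (β × γ)} (hR : Difunctional R)
    (h : rcomp (rconv R) R = rcomp S (rconv S)) : Difunctional (rcomp R S) := by
  rw [dif_iff, ← rcomp_assoc', left_comp hR h, ← rcomp_assoc', rcomp_assoc' R,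
    (dif_iff R).1 hR]

/-- (∼.B), base case of point types: `R ∼ R⁻¹ ∼ Left(R) ∼ Right(R)`, and if
`R ∘ S` is defined then `R ∼ S ∼ R ∘ S`. -/
theorem stmt12 {α : Type*} (R S : Set (α × α))
    (hR : Difunctional R) (hS : Difunctional S) :
    simRel R (rconv R) ∧ simRel R (rcomp R (rconv R)) ∧ simRel R (rcomp (rconv R) R) ∧
      (rcomp (rconv R) R = rcomp S (rconv S) →
        simRel R S ∧ simRel R (rcomp R S) ∧ simRel S (rcomp R S)) := by
  have hE : Difunctional (rcomp (rconv R) R) := left_dif (dif_conv hR)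
  have cE : rconv (rcomp (rconv R) R) = rcomp (rconv R) R := left_conv (rconv R)
  have iE : rcomp (rcomp (rconv R) R) (rcomp (rconv R) R) = rcomp (rconv R) R :=
    left_idem (dif_conv hR)
  refine ⟨⟨_, hE, ?_, ?_⟩, ⟨_, dif_conv hR, rfl, ?_⟩, ⟨_, hE, ?_, ?_⟩,
    fun h => ⟨⟨_, hE, ?_, ?_⟩, ⟨_, dif_conv hR, rfl, ?_⟩,
      ⟨_, dif_conv (comp_dif hR h), ?_, rfl⟩⟩⟩
  · rw [cE, iE]
  · rw [cE, iE, rconv_rconv']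
  · rw [left_conv, left_idem hR, rconv_rconv']
  · rw [cE, iE]
  · rw [cE]
  · rw [cE, iE]
  · rw [cE, iE, h]
  · rw [left_comp hR h, rconv_rconv']
  · rw [rconv_rconv', rconv_rcomp', rcomp_assoc', ← rcomp_assoc' (rconv R), h,
      rcomp_assoc' S, (dif_iff S).1 hS]
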